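/- Let n ≥ 1 and let I = {i_1, i_2, …, i_k} ⊆ [n] with 1 = i_1 < i_2 < ⋯ < i_k ≤ n, and set i_{k+1} = n+1. Then there exists a weakly increasing unit Fubini ranking α ∈ UFR_n^↑ whose set of lucky cars is exactly I if and only if i_{j+1} − i_j ≤ 2 for all j ∈ {1,…,k}; moreover, when this condition holds, such an α is unique (and necessarily |I| ≥ ⌈n/2⌉). -/

import Mathlib

/-- A Fubini ranking with `n` competitors: entries are in `[n]` (represented by `Fin n`,
where `i : Fin n` stands for the rank `i.val + 1`), and for every rank `r` occurring among
the entries, the number of indices `j` whose entry is strictly smaller than `r` equals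
`r - 1` (i.e. `r.val` in the `Fin n` encoding). -/
def IsFubini {n : ℕ} (α : Fin n → Fin n) : Prop :=
  ∀ r : Fin n, (∃ i, α i = r) →
    (Finset.univ.filter (fun j => α j < r)).card = (r : ℕ)

/-- The set of lucky cars of `α`: car `i` is lucky iff it is the first occurrence of its
value, i.e. `α j ≠ α i` for all `j < i`. -/
def luckySet {n : ℕ} (α : Fin n → Fin n) : Finset (Fin n) :=
  Finset.univ.filter (fun i => ∀ j, j < i → α j ≠ α i)

/-- The number of lucky cars of `α`. -/
def lucky {n : ℕ} (α : Fin n → Fin n) : ℕ := (luckySet α).card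

instance {n : ℕ} : DecidablePred (IsFubini (n := n)) := fun α =>
  inferInstanceAs (Decidable (∀ r : Fin n, (∃ i, α i = r) →
    (Finset.univ.filter (fun j => α j < r)).card = (r : ℕ)))

/-- `α` has every value occurring at most twice among its entries (the "unit" condition:
a unit Fubini ranking is a Fubini ranking in which at most two competitors share a rank). -/
def IsUnit2 {n : ℕ} (α : Fin n → Fin n) : Prop :=
  ∀ r : Fin n, (Finset.univ.filter (fun i => α i = r)).card ≤ 2

/-- The index `0` lies in `I`, and no two consecutive indices are both missing from `I`. -/
def HasShortGaps {n : ℕ} (I : Finset (Fin n)) : Prop :=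
  (∀ m : Fin n, (m : ℕ) = 0 → m ∈ I) ∧
    ∀ a b : Fin n, (b : ℕ) = a + 1 → a ∈ I ∨ b ∈ I

theorem mem_luckySet {n : ℕ} {α : Fin n → Fin n} {m : Fin n} :
    m ∈ luckySet α ↔ ∀ j, j < m → α j ≠ α m := by
  simp [luckySet]

/-- In a weakly increasing Fubini ranking, a lucky car has rank equal to its position. -/
theorem IsFubini.apply_eq_self_of_mem_luckySet {n : ℕ} {α : Fin n → Fin n} (hα : IsFubini α)
    (hmono : Monotone α) {m : Fin n} (hm : m ∈ luckySet α) : α m = m := by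
  have hcard := hα (α m) ⟨m, rfl⟩
  have hset : Finset.univ.filter (fun j => α j < α m) = Finset.Iio m := by
    ext j
    simp only [Finset.mem_filter, Finset.mem_univ, true_and, Finset.mem_Iio]
    refine ⟨fun h => ?_, fun h => lt_of_le_of_ne (hmono h.le) (mem_luckySet.1 hm j h)⟩
    by_contra hj
    exact absurd (hmono (not_lt.1 hj)) (not_le.2 h)
  rw [hset, Fin.card_Iio] at hcard
  exact Fin.ext hcard.symm

/-- In a weakly increasing tuple, an unlucky car shares the value of its predecessor. -/
theorem exists_pred_apply_eq_of_notMem_luckySet {n : ℕ} {α : Fin n → Fin n}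
    (hmono : Monotone α) {m : Fin n} (hm : m ∉ luckySet α) :
    ∃ p : Fin n, (m : ℕ) = p + 1 ∧ α p = α m := by
  simp only [mem_luckySet, not_forall, not_not] at hm
  obtain ⟨j, hjm, hj⟩ := hm
  have hlt : (j : ℕ) < m := hjm
  refine ⟨⟨m - 1, by omega⟩, by simp only; omega, le_antisymm (hmono ?_) ?_⟩
  · exact Fin.le_def.2 (by simp only; omega)
  · rw [← hj]
    exact hmono (Fin.le_def.2 (by simp only; omega))

theorem hasShortGaps_luckySet {n : ℕ} {α : Fin n → Fin n} (hunit : IsUnit2 α)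
    (hmono : Monotone α) : HasShortGaps (luckySet α) := by
  refine ⟨fun m hm => mem_luckySet.2 fun j hj => ?_, fun a b hab => ?_⟩
  · have : (j : ℕ) < m := hj
    omega
  · by_contra! hnot
    obtain ⟨p, hp, hpa⟩ := exists_pred_apply_eq_of_notMem_luckySet hmono hnot.1
    obtain ⟨q, hq, hqb⟩ := exists_pred_apply_eq_of_notMem_luckySet hmono hnot.2
    obtain rfl : q = a := Fin.ext (by omega)
    have hsub : {p, q, b} ⊆ Finset.univ.filter (fun i => α i = α b) := by
      intro x hx
      simp only [Finset.mem_insert, Finset.mem_singleton] at hx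
      rcases hx with rfl | rfl | rfl <;> simp [hpa, hqb]
    have hthree : ({p, q, b} : Finset (Fin n)).card = 3 :=
      Finset.card_eq_three.2 ⟨p, q, b, by
        refine ⟨?_, ?_, ?_, rfl⟩ <;> simp only [ne_eq, Fin.ext_iff] <;> omega⟩
    have := (Finset.card_le_card hsub).trans (hunit (α b))
    omega

/-- A weakly increasing Fubini ranking is determined by its lucky set. -/
theorem IsFubini.eq_of_luckySet_eq {n : ℕ} {α β : Fin n → Fin n} (hα : IsFubini α)
    (hβ : IsFubini β) (hαm : Monotone α) (hβm : Monotone β)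
    (h : luckySet α = luckySet β) : α = β := by
  have key : ∀ v : ℕ, ∀ m : Fin n, (m : ℕ) = v → α m = β m := by
    intro v
    induction v with
    | zero =>
      intro m hm
      have hlucky : ∀ γ : Fin n → Fin n, m ∈ luckySet γ := fun γ =>
        mem_luckySet.2 fun j hj => by
          have : (j : ℕ) < m := hj
          omega
      rw [hα.apply_eq_self_of_mem_luckySet hαm (hlucky α),
        hβ.apply_eq_self_of_mem_luckySet hβm (hlucky β)]
    | succ v ih =>
      intro m hm
      by_cases hmem : m ∈ luckySet α
      · rw [hα.apply_eq_self_of_mem_luckySet hαm hmem,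
          hβ.apply_eq_self_of_mem_luckySet hβm (h ▸ hmem)]
      · obtain ⟨p, hp, hpα⟩ := exists_pred_apply_eq_of_notMem_luckySet hαm hmem
        obtain ⟨q, hq, hqβ⟩ := exists_pred_apply_eq_of_notMem_luckySet hβm (h ▸ hmem)
        obtain rfl : p = q := Fin.ext (by omega)
        rw [← hpα, ← hqβ, ih p (by omega)]
  exact funext fun m => key m m rfl

/-- The ranking sending each element of `I` to itself and any other index to its predecessor. -/
def rankingOfLucky {n : ℕ} (I : Finset (Fin n)) (m : Fin n) : Fin n :=
  if m ∈ I then m else ⟨m - 1, by omega⟩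

theorem rankingOfLucky_of_mem {n : ℕ} {I : Finset (Fin n)} {m : Fin n} (hm : m ∈ I) :
    rankingOfLucky I m = m :=
  if_pos hm

theorem val_rankingOfLucky_of_notMem {n : ℕ} {I : Finset (Fin n)} {m : Fin n} (hm : m ∉ I) :
    (rankingOfLucky I m : ℕ) = m - 1 := by
  simp [rankingOfLucky, hm]

theorem rankingOfLucky_le {n : ℕ} (I : Finset (Fin n)) (m : Fin n) :
    (rankingOfLucky I m : ℕ) ≤ m := by
  unfold rankingOfLucky
  split_ifs <;> simp

theorem le_rankingOfLucky_add_one {n : ℕ} (I : Finset (Fin n)) (m : Fin n) :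
    (m : ℕ) ≤ rankingOfLucky I m + 1 := by
  unfold rankingOfLucky
  split_ifs
  · omega
  · simp only
    omega

theorem monotone_rankingOfLucky {n : ℕ} (I : Finset (Fin n)) : Monotone (rankingOfLucky I) := by
  intro a b hab
  rcases hab.eq_or_lt with rfl | hlt
  · exact le_rfl
  · have hlt' : (a : ℕ) < b := hlt
    have ha := rankingOfLucky_le I a
    have hb := le_rankingOfLucky_add_one I b
    exact Fin.le_def.2 (by omega)

theorem isUnit2_rankingOfLucky {n : ℕ} (I : Finset (Fin n)) : IsUnit2 (rankingOfLucky I) := by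
  intro r
  rw [← Finset.card_image_of_injective _ Fin.val_injective]
  refine (Finset.card_le_card (t := {(r : ℕ), (r : ℕ) + 1}) ?_).trans Finset.card_le_two
  intro v hv
  simp only [Finset.mem_image, Finset.mem_filter, Finset.mem_univ, true_and] at hv
  obtain ⟨m, rfl, rfl⟩ := hv
  have hle := rankingOfLucky_le I m
  have hge := le_rankingOfLucky_add_one I m
  simp only [Finset.mem_insert, Finset.mem_singleton]
  omega

theorem HasShortGaps.rankingOfLucky_mem {n : ℕ} {I : Finset (Fin n)} (hI : HasShortGaps I)
    (m : Fin n) : rankingOfLucky I m ∈ I := by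
  by_cases hm : m ∈ I
  · rwa [rankingOfLucky_of_mem hm]
  · have hpos : (m : ℕ) ≠ 0 := fun h => hm (hI.1 m h)
    have hval := val_rankingOfLucky_of_notMem hm
    exact (hI.2 (rankingOfLucky I m) m (by omega)).resolve_right hm

theorem HasShortGaps.isFubini_rankingOfLucky {n : ℕ} {I : Finset (Fin n)}
    (hI : HasShortGaps I) : IsFubini (rankingOfLucky I) := by
  rintro r ⟨m, rfl⟩
  have hmem := hI.rankingOfLucky_mem m
  generalize rankingOfLucky I m = r at hmem
  have hset : Finset.univ.filter (fun j => rankingOfLucky I j < r) = Finset.Iio r := by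
    ext j
    simp only [Finset.mem_filter, Finset.mem_univ, true_and, Finset.mem_Iio]
    refine ⟨fun h => ?_, fun h => (Fin.le_def.2 (rankingOfLucky_le I j)).trans_lt h⟩
    by_contra hj
    have hle := monotone_rankingOfLucky I (not_lt.1 hj)
    rw [rankingOfLucky_of_mem hmem] at hle
    exact absurd hle (not_le.2 h)
  rw [hset, Fin.card_Iio]

theorem HasShortGaps.luckySet_rankingOfLucky {n : ℕ} {I : Finset (Fin n)}
    (hI : HasShortGaps I) : luckySet (rankingOfLucky I) = I := by
  ext m
  rw [mem_luckySet]
  constructor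
  · intro h
    by_contra hm
    have hpos : (m : ℕ) ≠ 0 := fun h0 => hm (hI.1 m h0)
    have hval := val_rankingOfLucky_of_notMem hm
    exact h (rankingOfLucky I m) (Fin.lt_def.2 (by omega))
      (rankingOfLucky_of_mem (hI.rankingOfLucky_mem m))
  · intro hm j hj
    rw [rankingOfLucky_of_mem hm]
    exact ((Fin.le_def.2 (rankingOfLucky_le I j)).trans_lt hj).ne

/-- Short gaps, expressed through an increasing enumeration of the car numbers of `I`. -/
theorem hasShortGaps_iff_forall_sub_le_two {n k : ℕ} {I : Finset (Fin n)} {i : ℕ → ℕ}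
    (hk : 1 ≤ k) (hmono : ∀ a b : ℕ, 1 ≤ a → a < b → b ≤ k + 1 → i a < i b)
    (h1 : i 1 = 1) (hlast : i (k + 1) = n + 1)
    (hIdesc : ∀ m : Fin n, m ∈ I ↔ ∃ l : ℕ, 1 ≤ l ∧ l ≤ k ∧ (m : ℕ) + 1 = i l) :
    HasShortGaps I ↔ ∀ j : ℕ, 1 ≤ j → j ≤ k → i (j + 1) - i j ≤ 2 := by
  constructor
  · rintro ⟨-, hgap⟩ j hj hjk
    by_contra! hlarge
    have hbound : i (j + 1) ≤ n + 1 := by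
      rcases hjk.eq_or_lt with rfl | hlt
      · exact hlast.le
      · have := hmono (j + 1) (k + 1) (by omega) (by omega) le_rfl
        omega
    have hbetween : ∀ m : Fin n, i j < m + 1 → (m : ℕ) + 1 < i (j + 1) → m ∉ I := by
      intro m hlow hhigh hm
      obtain ⟨l, hl, hlk, heq⟩ := (hIdesc m).1 hm
      rcases lt_trichotomy l j with hlt | rfl | hlt
      · have := hmono l j hl hlt (by omega)
        omega
      · omega
      · rcases (Nat.succ_le_of_lt hlt).eq_or_lt with rfl | hlt'
        · exact absurd heq hhigh.ne
        · have := hmono (j + 1) l (by omega) hlt' (by omega)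
          omega
    rcases hgap ⟨i j, by omega⟩ ⟨i j + 1, by omega⟩ rfl with h | h
    · exact hbetween _ (by simp only; omega) (by simp only; omega) h
    · exact hbetween _ (by simp only; omega) (by simp only; omega) h
  · intro hgap
    refine ⟨fun m hm => (hIdesc m).2 ⟨1, le_rfl, hk, by omega⟩, fun a b hab => ?_⟩
    by_contra! hnot
    have hne : ∀ l, 1 ≤ l → l ≤ k → i l ≠ a + 1 ∧ i l ≠ a + 2 := fun l hl hlk =>
      ⟨fun h => hnot.1 ((hIdesc a).2 ⟨l, hl, hlk, h.symm⟩),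
        fun h => hnot.2 ((hIdesc b).2 ⟨l, hl, hlk, by omega⟩)⟩
    have hsmall : ∀ l, 1 ≤ l → l ≤ k → i l ≤ a := by
      intro l hl
      induction l, hl using Nat.le_induction with
      | base =>
        intro hlk
        have := hne 1 le_rfl hlk
        omega
      | succ l hl ih =>
        intro hlk
        have := hne (l + 1) (by omega) hlk
        have := ih (by omega)
        have := hgap l hl (by omega)
        omega
    have := hsmall k hk le_rfl
    have := hgap k hk le_rfl
    omega

theorem le_two_mul_of_forall_sub_le_two {n k : ℕ} {i : ℕ → ℕ} (h1 : i 1 = 1)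
    (hlast : i (k + 1) = n + 1)
    (hgap : ∀ j : ℕ, 1 ≤ j → j ≤ k → i (j + 1) - i j ≤ 2) : n ≤ 2 * k := by
  have hbound : ∀ l, l ≤ k → i (l + 1) ≤ 2 * l + 1 := by
    intro l
    induction l with
    | zero => simp [h1]
    | succ l ih =>
      intro hlk
      have := ih (by omega)
      have := hgap (l + 1) (by omega) hlk
      omega
  have := hbound k le_rfl
  omega

/-- Let `I ⊆ [n]` with car numbers `1 = i₁ < i₂ < ⋯ < i_k`, and set
`i_{k+1} = n + 1`. There exists a weakly increasing unit Fubini ranking with `n`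
competitors whose lucky set is exactly `I` iff `i_{j+1} − i_j ≤ 2` for all `j ∈ [k]`;
moreover, when this condition holds, such a ranking is unique and `|I| = k ≥ ⌈n/2⌉`.
Here a car index `m : Fin n` corresponds to the car number `m + 1`, and `i : ℕ → ℕ`
enumerates the car numbers of `I` in increasing order. -/
theorem weakly_increasing_unit_fubini_lucky_set_characterization
    (n k : ℕ) (hn : 1 ≤ n) (hk : 1 ≤ k)
    (I : Finset (Fin n)) (hI : I.card = k)
    (i : ℕ → ℕ)
    (hmono : ∀ a b : ℕ, 1 ≤ a → a < b → b ≤ k + 1 → i a < i b)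
    (h1 : i 1 = 1) (hlast : i (k + 1) = n + 1)
    (hIdesc : ∀ m : Fin n, m ∈ I ↔ ∃ ℓ : ℕ, 1 ≤ ℓ ∧ ℓ ≤ k ∧ (m : ℕ) + 1 = i ℓ) :
    ((∃ α : Fin n → Fin n,
        IsFubini α ∧ IsUnit2 α ∧ Monotone α ∧ luckySet α = I) ↔
      ∀ j : ℕ, 1 ≤ j → j ≤ k → i (j + 1) - i j ≤ 2)
    ∧ ((∀ j : ℕ, 1 ≤ j → j ≤ k → i (j + 1) - i j ≤ 2) →
        (∃! α : Fin n → Fin n,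
            IsFubini α ∧ IsUnit2 α ∧ Monotone α ∧ luckySet α = I)
          ∧ (n + 1) / 2 ≤ k) := by
  have hiff := hasShortGaps_iff_forall_sub_le_two hk hmono h1 hlast hIdesc
  have hexists : HasShortGaps I → IsFubini (rankingOfLucky I) ∧ IsUnit2 (rankingOfLucky I) ∧
      Monotone (rankingOfLucky I) ∧ luckySet (rankingOfLucky I) = I := fun h =>
    ⟨h.isFubini_rankingOfLucky, isUnit2_rankingOfLucky I, monotone_rankingOfLucky I,
      h.luckySet_rankingOfLucky⟩
  refine ⟨⟨?_, fun hgap => ⟨_, hexists (hiff.2 hgap)⟩⟩, fun hgap => ⟨?_, ?_⟩⟩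
  · rintro ⟨α, -, hunit, hαm, rfl⟩
    exact hiff.1 (hasShortGaps_luckySet hunit hαm)
  · obtain ⟨hf, hu, hm, hl⟩ := hexists (hiff.2 hgap)
    exact ⟨_, ⟨hf, hu, hm, hl⟩, fun β ⟨hβ, _, hβm, hβl⟩ =>
      hβ.eq_of_luckySet_eq hf hβm hm (hβl.trans hl.symm)⟩
  · have := le_two_mul_of_forall_sub_le_two h1 hlast hgap
    omega
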